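/- Let ℓ ∈ ℕ and let u be a nonzero element of the eigenspace E_ℓ. Then the number μ(u) of nodal domains of u satisfies the improved bound μ(u) ≤ μ_L(ℓ), where μ_L(ℓ) = 2(r² + 1) if ℓ = 2r is even, and μ_L(ℓ) = 2r(r+1) + 2 if ℓ = 2r+1 is odd. Moreover μ_L(ℓ) < ℓ(ℓ+1)/2 + 1 for all ℓ ≥ 3, and μ_L(2) = 2·(2+1)/2·... = 4 equals the Courant bound for ℓ = 2. -/

import Mathlib

/-- The physicist's Hermite polynomials: `H 0 = 1`, `H 1 = 2X`,
`H (n+2) = 2X · H (n+1) - 2(n+1) · H n`. -/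
noncomputable def H : ℕ → Polynomial ℝ
  | 0 => 1
  | 1 => Polynomial.C 2 * Polynomial.X
  | n + 2 => Polynomial.C 2 * Polynomial.X * H (n + 1) - Polynomial.C (2 * (n + 1) : ℝ) * H n

/-- The basis eigenfunctions `φ_{m,n}(x,y) = H_m(x) H_n(y) e^{-(x²+y²)/2}` of the 2D
isotropic quantum harmonic oscillator. -/
noncomputable def phi (m n : ℕ) : ℝ × ℝ → ℝ := fun p =>
  (H m).eval p.1 * (H n).eval p.2 * Real.exp (-(p.1 ^ 2 + p.2 ^ 2) / 2)

/-- The eigenspace `E_ℓ` associated with the eigenvalue `2(ℓ+1)`: the real span of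
`φ_{ℓ-j,j}`, `0 ≤ j ≤ ℓ`. -/
noncomputable def eigenspace (ℓ : ℕ) : Submodule ℝ (ℝ × ℝ → ℝ) :=
  Submodule.span ℝ {f : ℝ × ℝ → ℝ | ∃ j : ℕ, j ≤ ℓ ∧ f = phi (ℓ - j) j}

/-- The number `μ(u)` of nodal domains of `u`: the number of connected components of
`{p : u p ≠ 0}`. -/
noncomputable def mu (u : ℝ × ℝ → ℝ) : ℕ :=
  {C : Set (ℝ × ℝ) | ∃ p : ℝ × ℝ, u p ≠ 0 ∧
    C = connectedComponentIn {q : ℝ × ℝ | u q ≠ 0} p}.ncard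

/-- Leydold's improved bound: `μ_L(2r) = 2(r²+1)` and `μ_L(2r+1) = 2r(r+1)+2`. -/
def muL (ℓ : ℕ) : ℕ :=
  if ℓ % 2 = 0 then 2 * ((ℓ / 2) ^ 2 + 1) else 2 * (ℓ / 2) * (ℓ / 2 + 1) + 2

open MeasureTheory Filter Topology

lemma H_deriv (n : ℕ) : Polynomial.derivative (H (n+1)) = Polynomial.C (2 * (n+1) : ℝ) * H n := by
  induction n using Nat.strong_induction_on with
  | _ n ih =>
    match n with
    | 0 => simp [H]
    | 1 =>
      simp [H]
      ring_nf
    | n + 2 =>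
      have h1 := ih (n+1) (by omega)
      have h0 := ih n (by omega)
      have e : H (n+2+1) = Polynomial.C 2 * Polynomial.X * H (n + 2)
        - Polynomial.C (2 * ((n+1 : ℕ) + 1) : ℝ) * H (n+1) := rfl
      have e2 : H (n+2) = Polynomial.C 2 * Polynomial.X * H (n + 1)
        - Polynomial.C (2 * ((n : ℕ) + 1) : ℝ) * H (n) := rfl
      rw [e]
      simp only [Polynomial.derivative_sub, Polynomial.derivative_mul, Polynomial.derivative_C,
        Polynomial.derivative_X, h1, h0]
      rw [e2]
      push_cast
      have c2 : (Polynomial.C 2 : Polynomial ℝ) = 2 := rfl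
      simp only [Polynomial.C_mul, Polynomial.C_add, Polynomial.C_1, c2]
      ring

lemma H_succ (n : ℕ) : H (n+1) = Polynomial.C 2 * Polynomial.X * H n - Polynomial.derivative (H n) := by
  cases n with
  | zero => simp [H]
  | succ n => rw [H_deriv]; rfl

lemma poly_int (p : Polynomial ℝ) : Integrable (fun x : ℝ => p.eval x * Real.exp (-x^2)) := by
  induction p using Polynomial.induction_on' with
  | add p q hp hq =>
    simp only [Polynomial.eval_add, add_mul]
    exact hp.add hq
  | monomial n a =>
    have := (integrable_rpow_mul_exp_neg_mul_sq (b := 1) one_pos (s := n)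
      (by have : (0:ℝ) ≤ n := by positivity
          linarith)).const_mul a
    simpa [mul_assoc] using this

lemma poly_hasDeriv (r : Polynomial ℝ) (x : ℝ) : HasDerivAt (fun x : ℝ => r.eval x * Real.exp (-x^2))
    ((Polynomial.derivative r - Polynomial.C 2 * Polynomial.X * r).eval x * Real.exp (-x^2)) x := by
  have h1 := r.hasDerivAt x
  have h2 : HasDerivAt (fun x : ℝ => Real.exp (-x^2)) (Real.exp (-x^2) * (-(2*x))) x := by
    have := ((hasDerivAt_pow 2 x).neg).exp
    simpa using this
  have h := h1.mul h2
  refine h.congr_deriv ?_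
  simp only [Polynomial.eval_sub, Polynomial.eval_mul, Polynomial.eval_C, Polynomial.eval_X]
  ring

lemma int_slice (r : Polynomial ℝ) (U : Set ℝ) (hU : IsOpen U)
    (hr : ∀ x ∈ frontier U, r.eval x = 0) :
    ∫ x in U, (Polynomial.derivative r - Polynomial.C 2 * Polynomial.X * r).eval x * Real.exp (-x^2) = 0 := by
  by_cases h0 : r = 0
  · simp [h0]
  set f : ℝ → ℝ := fun x => r.eval x * Real.exp (-x^2) with hf
  set f' : ℝ → ℝ := fun x => (Polynomial.derivative r - Polynomial.C 2 * Polynomial.X * r).eval x * Real.exp (-x^2) with hf'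
  have hfc : Continuous f := by fun_prop
  have hfi : Integrable f := poly_int r
  have hfi' : Integrable f' := poly_int _
  have hfin : (frontier U).Countable := by
    refine Set.Finite.countable (Set.Finite.subset (r.roots.toFinset.finite_toSet) ?_)
    intro x hx
    simp [h0, hr x hx]
  have ht : Tendsto f atTop (𝓝 0) :=
    tendsto_zero_of_hasDerivAt_of_integrableOn_Ioi (a := 0) (f' := f') (fun x _ => poly_hasDeriv r x)
      hfi'.integrableOn hfi.integrableOn
  have hb : Tendsto f atBot (𝓝 0) :=
    tendsto_zero_of_hasDerivAt_of_integrableOn_Iic (a := 0) (f' := f') (fun x _ => poly_hasDeriv r x)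
      hfi'.integrableOn hfi.integrableOn
  set g := U.indicator f
  have hgi' : Integrable (U.indicator f') := hfi'.indicator hU.measurableSet
  have hgc : Continuous g := by
    apply Continuous.indicator ?_ hfc
    intro a ha
    simp [hf, hr a ha]
  have hgd : ∀ x, x ∉ frontier U → HasDerivAt g (U.indicator f' x) x := by
    intro x hx
    by_cases hxU : x ∈ U
    · rw [Set.indicator_of_mem hxU]
      refine (poly_hasDeriv r x).congr_of_eventuallyEq ?_
      filter_upwards [hU.mem_nhds hxU] with z hz
      simp [g, hz, hf]
    · rw [Set.indicator_of_notMem hxU]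
      refine (hasDerivAt_const x (0:ℝ)).congr_of_eventuallyEq ?_
      have : x ∈ (closure U)ᶜ := by
        intro hc
        exact hx ⟨hc, by rwa [hU.interior_eq]⟩
      filter_upwards [isClosed_closure.isOpen_compl.mem_nhds this] with z hz
      have : z ∉ U := fun h => hz (subset_closure h)
      simp [g, this]
  have key : ∀ n : ℕ, ∫ x in (-(n:ℝ))..n, U.indicator f' x = g n - g (-(n:ℝ)) := fun n =>
    integral_eq_of_hasDerivAt_off_countable g _ hfin hgc.continuousOn (fun x hx => hgd x hx.2)
      hgi'.intervalIntegrable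
  have l1 : Tendsto (fun n : ℕ => ∫ x in (-(n:ℝ))..n, U.indicator f' x) atTop (𝓝 (∫ x, U.indicator f' x)) :=
    intervalIntegral_tendsto_integral hgi' (tendsto_neg_atTop_atBot.comp tendsto_natCast_atTop_atTop)
      tendsto_natCast_atTop_atTop
  have bnd : ∀ x, ‖g x‖ ≤ ‖f x‖ := fun x => norm_indicator_le_norm_self _ _
  have l2 : Tendsto (fun n : ℕ => g n - g (-(n:ℝ))) atTop (𝓝 (0 - 0)) := by
    refine Tendsto.sub ?_ ?_
    · refine squeeze_zero_norm (fun n => bnd _) ?_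
      simpa using (ht.comp tendsto_natCast_atTop_atTop).norm
    · refine squeeze_zero_norm (fun n => bnd _) ?_
      simpa using (hb.comp (tendsto_neg_atTop_atBot.comp tendsto_natCast_atTop_atTop)).norm
  rw [← integral_indicator hU.measurableSet]
  simp only [key] at l1
  rw [sub_zero] at l2
  exact tendsto_nhds_unique l1 l2

/-- 1D Hermite inner product. -/
lemma H_ortho_aux (m : ℕ) (q : Polynomial ℝ) :
    ∫ x : ℝ, (H (m+1) * q).eval x * Real.exp (-x^2) = ∫ x : ℝ, (H m * Polynomial.derivative q).eval x * Real.exp (-x^2) := by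
  have h := int_slice (H m * q) Set.univ isOpen_univ (by simp)
  rw [setIntegral_univ] at h
  have e : (H m * Polynomial.derivative q) = (Polynomial.derivative (H m * q) - Polynomial.C 2 * Polynomial.X * (H m * q)) + H (m+1) * q := by
    rw [H_succ, Polynomial.derivative_mul]; ring
  rw [e]
  simp only [Polynomial.eval_add, add_mul]
  rw [integral_add (poly_int _) (poly_int _), h, zero_add]

lemma H_ortho_lt : ∀ (m n : ℕ), n < m → ∫ x : ℝ, (H m * H n).eval x * Real.exp (-x^2) = 0 := by
  intro m
  induction m with
  | zero => intro n hn; omega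
  | succ m ih =>
    intro n hn
    rw [H_ortho_aux]
    cases n with
    | zero => simp [H]
    | succ n =>
      rw [H_deriv]
      have := ih n (by omega)
      have e : H m * (Polynomial.C (2 * (n+1):ℝ) * H n) = Polynomial.C (2 * (n+1):ℝ) * (H m * H n) := by ring
      rw [e]
      simp only [Polynomial.eval_mul, Polynomial.eval_C, mul_assoc] at this ⊢
      simp only [integral_const_mul, this, mul_zero]

lemma H_ortho (m n : ℕ) (h : m ≠ n) : ∫ x : ℝ, (H m * H n).eval x * Real.exp (-x^2) = 0 := by
  rcases lt_or_gt_of_ne h with h | h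
  · rw [mul_comm]; exact H_ortho_lt _ _ h
  · exact H_ortho_lt _ _ h

noncomputable def cc (m : ℕ) : ℝ := ∫ x : ℝ, (H m * H m).eval x * Real.exp (-x^2)

lemma cc_succ (m : ℕ) : cc (m+1) = 2 * (m+1) * cc m := by
  unfold cc
  rw [H_ortho_aux, H_deriv]
  have e : H m * (Polynomial.C (2 * (m+1):ℝ) * H m) = Polynomial.C (2 * (m+1):ℝ) * (H m * H m) := by ring
  rw [e, ← integral_const_mul]
  congr 1; ext x
  simp only [Polynomial.eval_mul, Polynomial.eval_C, mul_assoc]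

lemma cc_pos (m : ℕ) : 0 < cc m := by
  induction m with
  | zero =>
    simp only [cc, H, mul_one, Polynomial.eval_one, one_mul]
    have := integral_gaussian 1
    simp at this
    rw [this]; positivity
  | succ m ih => rw [cc_succ]; positivity

lemma phi_mul_phi (m n m' n' : ℕ) (p : ℝ × ℝ) : phi m n p * phi m' n' p =
    ((H m * H m').eval p.1 * Real.exp (-p.1^2)) * ((H n * H n').eval p.2 * Real.exp (-p.2^2)) := by
  have : Real.exp (-(p.1 ^ 2 + p.2 ^ 2) / 2) * Real.exp (-(p.1 ^ 2 + p.2 ^ 2) / 2)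
      = Real.exp (-p.1^2) * Real.exp (-p.2^2) := by
    rw [← Real.exp_add, ← Real.exp_add]; congr 1; ring
  simp only [phi, Polynomial.eval_mul]
  linear_combination ((H m).eval p.1 * (H m').eval p.1 * (H n).eval p.2 * (H n').eval p.2) * this

lemma phi_cont (m n : ℕ) : Continuous (phi m n) := by unfold phi; fun_prop

lemma phi_memLp (m n : ℕ) : MemLp (phi m n) 2 (volume : Measure (ℝ × ℝ)) := by
  rw [memLp_two_iff_integrable_sq (phi_cont m n).aestronglyMeasurable]
  have := (poly_int (H m * H m)).mul_prod (poly_int (H n * H n))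
  refine this.congr (Eventually.of_forall fun p => ?_)
  simp only [pow_two (phi m n p), phi_mul_phi]

lemma phi_inner (m n m' n' : ℕ) : ∫ p, phi m n p * phi m' n' p =
    if (m, n) = (m', n') then cc m * cc n else 0 := by
  simp only [phi_mul_phi]
  rw [Measure.volume_eq_prod, integral_prod_mul (fun x => (H m * H m').eval x * Real.exp (-x^2))
    (fun x => (H n * H n').eval x * Real.exp (-x^2))]
  by_cases h1 : m = m'
  · by_cases h2 : n = n'
    · subst h1; subst h2; simp [cc]
    · rw [H_ortho _ _ h2]; simp [h2]
  · rw [H_ortho _ _ h1]; simp [h1]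

/-- finite combos -/
noncomputable def fu (s : Finset (ℕ × ℕ)) (c : ℕ × ℕ → ℝ) : ℝ × ℝ → ℝ :=
  fun p => ∑ a ∈ s, c a * phi a.1 a.2 p
noncomputable def fux (s : Finset (ℕ × ℕ)) (c : ℕ × ℕ → ℝ) : ℝ × ℝ → ℝ :=
  fun p => ∑ a ∈ s, c a * (2 * a.1) * phi (a.1 - 1) a.2 p
noncomputable def fuy (s : Finset (ℕ × ℕ)) (c : ℕ × ℕ → ℝ) : ℝ × ℝ → ℝ :=
  fun p => ∑ a ∈ s, c a * (2 * a.2) * phi a.1 (a.2 - 1) p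

lemma fu_cont (s c) : Continuous (fu s c) := by
  unfold fu
  exact continuous_finsetSum _ fun a _ => continuous_const.mul (phi_cont _ _)
lemma fu_memLp (s c) : MemLp (fu s c) 2 (volume : Measure (ℝ × ℝ)) := by
  unfold fu
  exact memLp_finsetSum _ fun a _ => (phi_memLp _ _).const_mul _
lemma fux_memLp (s c) : MemLp (fux s c) 2 (volume : Measure (ℝ × ℝ)) := by
  unfold fux
  exact memLp_finsetSum _ fun a _ => (phi_memLp _ _).const_mul _
lemma fuy_memLp (s c) : MemLp (fuy s c) 2 (volume : Measure (ℝ × ℝ)) := by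
  unfold fuy
  exact memLp_finsetSum _ fun a _ => (phi_memLp _ _).const_mul _

lemma H_deriv' (n : ℕ) : Polynomial.derivative (H n) = Polynomial.C (2 * n : ℝ) * H (n-1) := by
  cases n with
  | zero => simp [H]
  | succ n => rw [H_deriv]; simp

lemma ibp_x (s c) (D : Set (ℝ × ℝ)) (hD : IsOpen D) (hf : ∀ p ∈ frontier D, fu s c p = 0) (m n : ℕ) :
    ∫ p in D, fux s c p * phi m n p = ∫ p in D, fu s c p * phi (m+1) n p := by
  have i1 : Integrable (fun p => fux s c p * phi m n p) (volume : Measure (ℝ × ℝ)) :=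
    (fux_memLp s c).integrable_mul (phi_memLp m n)
  have i2 : Integrable (fun p => fu s c p * phi (m+1) n p) (volume : Measure (ℝ × ℝ)) :=
    (fu_memLp s c).integrable_mul (phi_memLp (m+1) n)
  rw [← sub_eq_zero, ← integral_sub i1.integrableOn i2.integrableOn, ← integral_indicator hD.measurableSet]
  have i3 : Integrable (D.indicator fun p => fux s c p * phi m n p - fu s c p * phi (m+1) n p)
      ((volume : Measure ℝ).prod (volume : Measure ℝ)) :=
    (i1.sub i2).indicator hD.measurableSet
  rw [Measure.volume_eq_prod, integral_prod_symm _ i3]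
  refine integral_eq_zero_of_ae (Eventually.of_forall fun y => ?_)
  set pp : Polynomial ℝ := ∑ a ∈ s, Polynomial.C (c a * (H a.2).eval y) * H a.1 with hpp
  have e1 : ∀ x, fu s c (x, y) = pp.eval x * Real.exp (-(x^2+y^2)/2) := by
    intro x
    simp only [fu, phi, hpp, Polynomial.eval_finsetSum, Polynomial.eval_mul, Polynomial.eval_C,
      Finset.sum_mul]
    exact Finset.sum_congr rfl fun a _ => by ring
  have e2 : ∀ x, fux s c (x, y) = (Polynomial.derivative pp).eval x * Real.exp (-(x^2+y^2)/2) := by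
    intro x
    simp only [fux, phi, hpp, Polynomial.derivative_sum, Polynomial.derivative_C_mul, H_deriv',
      Polynomial.eval_finsetSum, Polynomial.eval_mul, Polynomial.eval_C, Finset.sum_mul]
    exact Finset.sum_congr rfl fun a _ => by ring
  set U : Set ℝ := (fun x : ℝ => (x, y)) ⁻¹' D with hUdef
  have hc : Continuous (fun x : ℝ => (x, y)) := by fun_prop
  have hU : IsOpen U := hD.preimage hc
  have hr : ∀ x ∈ frontier U, (pp * H m).eval x = 0 := by
    intro x hx
    have h := hf _ (hc.frontier_preimage_subset D hx)
    rw [e1] at h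
    have := (mul_eq_zero.1 h).resolve_right (Real.exp_pos _).ne'
    simp [this]
  have key := int_slice _ U hU hr
  have e3 : (fun x => (D.indicator fun p => fux s c p * phi m n p - fu s c p * phi (m+1) n p) (x, y))
    = fun x => ((H n).eval y * Real.exp (-y^2)) * U.indicator (fun x => (Polynomial.derivative (pp * H m) - Polynomial.C 2 * Polynomial.X * (pp * H m)).eval x * Real.exp (-x^2)) x := by
    ext x
    by_cases hx : (x, y) ∈ D
    · have hx' : x ∈ U := hx
      rw [Set.indicator_of_mem hx, Set.indicator_of_mem hx', e1, e2, H_succ m |> fun h => show phi (m+1) n (x,y) = _ by unfold phi; rw [h]]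
      have : Real.exp (-(x ^ 2 + y ^ 2) / 2) * Real.exp (-(x ^ 2 + y ^ 2) / 2)
          = Real.exp (-x^2) * Real.exp (-y^2) := by
        rw [← Real.exp_add, ← Real.exp_add]; congr 1; ring
      simp only [phi, Polynomial.eval_sub, Polynomial.eval_mul, Polynomial.eval_C, Polynomial.eval_X,
        Polynomial.derivative_mul, Polynomial.eval_add]
      linear_combination ((Polynomial.derivative pp).eval x * (H m).eval x * (H n).eval y
        - pp.eval x * (2 * x * (H m).eval x - (Polynomial.derivative (H m)).eval x) * (H n).eval y) * this
    · have hx' : x ∉ U := hx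
      rw [Set.indicator_of_notMem hx, Set.indicator_of_notMem hx', mul_zero]
  show ∫ x, (D.indicator fun p => fux s c p * phi m n p - fu s c p * phi (m+1) n p) (x, y) = 0
  rw [e3, integral_const_mul, integral_indicator hU.measurableSet, key, mul_zero]

lemma ibp_y (s c) (D : Set (ℝ × ℝ)) (hD : IsOpen D) (hf : ∀ p ∈ frontier D, fu s c p = 0) (m n : ℕ) :
    ∫ p in D, fuy s c p * phi m n p = ∫ p in D, fu s c p * phi m (n+1) p := by
  have i1 : Integrable (fun p => fuy s c p * phi m n p) (volume : Measure (ℝ × ℝ)) :=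
    (fuy_memLp s c).integrable_mul (phi_memLp m n)
  have i2 : Integrable (fun p => fu s c p * phi m (n+1) p) (volume : Measure (ℝ × ℝ)) :=
    (fu_memLp s c).integrable_mul (phi_memLp m (n+1))
  rw [← sub_eq_zero, ← integral_sub i1.integrableOn i2.integrableOn, ← integral_indicator hD.measurableSet]
  have i3 : Integrable (D.indicator fun p => fuy s c p * phi m n p - fu s c p * phi m (n+1) p)
      ((volume : Measure ℝ).prod (volume : Measure ℝ)) :=
    (i1.sub i2).indicator hD.measurableSet
  rw [Measure.volume_eq_prod, integral_prod _ i3]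
  refine integral_eq_zero_of_ae (Eventually.of_forall fun y => ?_)
  set pp : Polynomial ℝ := ∑ a ∈ s, Polynomial.C (c a * (H a.1).eval y) * H a.2 with hpp
  have e1 : ∀ x, fu s c (y, x) = pp.eval x * Real.exp (-(y^2+x^2)/2) := by
    intro x
    simp only [fu, phi, hpp, Polynomial.eval_finsetSum, Polynomial.eval_mul, Polynomial.eval_C,
      Finset.sum_mul]
    exact Finset.sum_congr rfl fun a _ => by ring
  have e2 : ∀ x, fuy s c (y, x) = (Polynomial.derivative pp).eval x * Real.exp (-(y^2+x^2)/2) := by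
    intro x
    simp only [fuy, phi, hpp, Polynomial.derivative_sum, Polynomial.derivative_C_mul, H_deriv',
      Polynomial.eval_finsetSum, Polynomial.eval_mul, Polynomial.eval_C, Finset.sum_mul]
    exact Finset.sum_congr rfl fun a _ => by ring
  set U : Set ℝ := (fun x : ℝ => (y, x)) ⁻¹' D with hUdef
  have hc : Continuous (fun x : ℝ => (y, x)) := by fun_prop
  have hU : IsOpen U := hD.preimage hc
  have hr : ∀ x ∈ frontier U, (pp * H n).eval x = 0 := by
    intro x hx
    have h := hf _ (hc.frontier_preimage_subset D hx)
    rw [e1] at h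
    have := (mul_eq_zero.1 h).resolve_right (Real.exp_pos _).ne'
    simp [this]
  have key := int_slice _ U hU hr
  have e3 : (fun x => (D.indicator fun p => fuy s c p * phi m n p - fu s c p * phi m (n+1) p) (y, x))
    = fun x => ((H m).eval y * Real.exp (-y^2)) * U.indicator (fun x => (Polynomial.derivative (pp * H n) - Polynomial.C 2 * Polynomial.X * (pp * H n)).eval x * Real.exp (-x^2)) x := by
    ext x
    by_cases hx : (y, x) ∈ D
    · have hx' : x ∈ U := hx
      rw [Set.indicator_of_mem hx, Set.indicator_of_mem hx', e1, e2, H_succ n |> fun h => show phi m (n+1) (y,x) = _ by unfold phi; rw [h]]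
      have : Real.exp (-(y ^ 2 + x ^ 2) / 2) * Real.exp (-(y ^ 2 + x ^ 2) / 2)
          = Real.exp (-x^2) * Real.exp (-y^2) := by
        rw [← Real.exp_add, ← Real.exp_add]; congr 1; ring
      simp only [phi, Polynomial.eval_sub, Polynomial.eval_mul, Polynomial.eval_C, Polynomial.eval_X,
        Polynomial.derivative_mul, Polynomial.eval_add]
      linear_combination ((Polynomial.derivative pp).eval x * (H n).eval x * (H m).eval y
        - pp.eval x * (2 * x * (H n).eval x - (Polynomial.derivative (H n)).eval x) * (H m).eval y) * this
    · have hx' : x ∉ U := hx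
      rw [Set.indicator_of_notMem hx, Set.indicator_of_notMem hx', mul_zero]
  show ∫ x, (D.indicator fun p => fuy s c p * phi m n p - fu s c p * phi m (n+1) p) (y, x) = 0
  rw [e3, integral_const_mul, integral_indicator hU.measurableSet, key, mul_zero]

/-- energy identity on a nodal set -/
lemma energy (ℓ : ℕ) (s : Finset (ℕ × ℕ)) (hs : ∀ a ∈ s, a.1 + a.2 = ℓ) (c) (D : Set (ℝ × ℝ)) (hD : IsOpen D)
    (hf : ∀ p ∈ frontier D, fu s c p = 0) :
    (∫ p in D, fux s c p * fux s c p) + (∫ p in D, fuy s c p * fuy s c p)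
      = 2 * ℓ * ∫ p in D, fu s c p * fu s c p := by
  have k1 : ∫ p in D, fux s c p * fux s c p = ∑ a ∈ s, c a * (2 * a.1) * ∫ p in D, fu s c p * phi a.1 a.2 p := by
    have : ∀ p, fux s c p * fux s c p = ∑ a ∈ s, c a * (2 * a.1) * (fux s c p * phi (a.1-1) a.2 p) := by
      intro p
      conv_lhs => rw [show fux s c p * fux s c p = fux s c p * ∑ a ∈ s, c a * (2 * a.1) * phi (a.1 - 1) a.2 p from rfl]
      rw [Finset.mul_sum]
      exact Finset.sum_congr rfl fun a _ => by ring
    simp only [this]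
    rw [integral_finsetSum]
    · refine Finset.sum_congr rfl fun a _ => ?_
      rw [integral_const_mul]
      rcases Nat.eq_zero_or_pos a.1 with h | h
      · simp [h]
      · rw [ibp_x s c D hD hf, Nat.sub_add_cancel h]
    · intro a _
      exact (((fux_memLp s c).integrable_mul (phi_memLp _ _)).integrableOn).const_mul _
  have k2 : ∫ p in D, fuy s c p * fuy s c p = ∑ a ∈ s, c a * (2 * a.2) * ∫ p in D, fu s c p * phi a.1 a.2 p := by
    have : ∀ p, fuy s c p * fuy s c p = ∑ a ∈ s, c a * (2 * a.2) * (fuy s c p * phi a.1 (a.2-1) p) := by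
      intro p
      conv_lhs => rw [show fuy s c p * fuy s c p = fuy s c p * ∑ a ∈ s, c a * (2 * a.2) * phi a.1 (a.2 - 1) p from rfl]
      rw [Finset.mul_sum]
      exact Finset.sum_congr rfl fun a _ => by ring
    simp only [this]
    rw [integral_finsetSum]
    · refine Finset.sum_congr rfl fun a _ => ?_
      rw [integral_const_mul]
      rcases Nat.eq_zero_or_pos a.2 with h | h
      · simp [h]
      · rw [ibp_y s c D hD hf, Nat.sub_add_cancel h]
    · intro a _
      exact (((fuy_memLp s c).integrable_mul (phi_memLp _ _)).integrableOn).const_mul _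
  have k3 : ∫ p in D, fu s c p * fu s c p = ∑ a ∈ s, c a * ∫ p in D, fu s c p * phi a.1 a.2 p := by
    have : ∀ p, fu s c p * fu s c p = ∑ a ∈ s, c a * (fu s c p * phi a.1 a.2 p) := by
      intro p
      conv_lhs => rw [show fu s c p * fu s c p = fu s c p * ∑ a ∈ s, c a * phi a.1 a.2 p from rfl]
      rw [Finset.mul_sum]
      exact Finset.sum_congr rfl fun a _ => by ring
    simp only [this]
    rw [integral_finsetSum]
    · exact Finset.sum_congr rfl fun a _ => integral_const_mul _ _
    · intro a _
      exact (((fu_memLp s c).integrable_mul (phi_memLp _ _)).integrableOn).const_mul _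
  rw [k1, k2, k3, Finset.mul_sum, ← Finset.sum_add_distrib]
  refine Finset.sum_congr rfl fun a ha => ?_
  have : (a.1 : ℝ) + a.2 = ℓ := by exact_mod_cast hs a ha
  rw [← this]; ring

lemma x_phi (m n : ℕ) (p : ℝ × ℝ) : p.1 * phi m n p = 1/2 * phi (m+1) n p + m * phi (m-1) n p := by
  simp only [phi, H_succ, H_deriv', Polynomial.eval_sub, Polynomial.eval_mul, Polynomial.eval_C, Polynomial.eval_X]
  ring

lemma y_phi (m n : ℕ) (p : ℝ × ℝ) : p.2 * phi m n p = 1/2 * phi m (n+1) p + n * phi m (n-1) p := by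
  simp only [phi, H_succ, H_deriv', Polynomial.eval_sub, Polynomial.eval_mul, Polynomial.eval_C, Polynomial.eval_X]
  ring

noncomputable def PhiS : Submodule ℝ (ℝ × ℝ → ℝ) := Submodule.span ℝ {f | ∃ m n, f = phi m n}

lemma PhiS_phi (m n : ℕ) : phi m n ∈ PhiS := Submodule.subset_span ⟨m, n, rfl⟩

lemma PhiS_mul (s t : ℝ) (g : ℝ × ℝ → ℝ) (hg : g ∈ PhiS) : (fun p : ℝ × ℝ => (s * p.1 + t * p.2) * g p) ∈ PhiS := by
  induction hg using Submodule.span_induction with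
  | mem x h =>
    obtain ⟨m, n, rfl⟩ := h
    have : (fun p : ℝ × ℝ => (s * p.1 + t * p.2) * phi m n p) =
      s • ((1/2 : ℝ) • phi (m+1) n + (m:ℝ) • phi (m-1) n) + t • ((1/2:ℝ) • phi m (n+1) + (n:ℝ) • phi m (n-1)) := by
      ext p
      simp only [Pi.add_apply, Pi.smul_apply, smul_eq_mul, ← x_phi, ← y_phi]
      ring
    rw [this]
    exact add_mem (PhiS.smul_mem _ (add_mem (PhiS.smul_mem _ (PhiS_phi _ _)) (PhiS.smul_mem _ (PhiS_phi _ _))))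
      (PhiS.smul_mem _ (add_mem (PhiS.smul_mem _ (PhiS_phi _ _)) (PhiS.smul_mem _ (PhiS_phi _ _))))
  | zero =>
    convert PhiS.zero_mem using 1
    ext p; simp
  | add x y _ _ hx hy =>
    have := add_mem hx hy
    convert this using 1
    ext p; simp [mul_add]
  | smul a x _ hx =>
    have := PhiS.smul_mem a hx
    convert this using 1
    ext p; simp; ring

lemma PhiS_pow (s t : ℝ) (k : ℕ) : (fun p : ℝ × ℝ => (s * p.1 + t * p.2)^k * phi 0 0 p) ∈ PhiS := by
  induction k with
  | zero => simpa using PhiS_phi 0 0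
  | succ k ih =>
    have := PhiS_mul s t _ ih
    convert this using 1
    ext p; ring

lemma PhiS_orth (f : ℝ × ℝ → ℝ) (hf : MemLp f 2 (volume : Measure (ℝ × ℝ)))
    (h : ∀ m n, ∫ p, f p * phi m n p = 0) (g : ℝ × ℝ → ℝ) (hg : g ∈ PhiS) :
    MemLp g 2 (volume : Measure (ℝ × ℝ)) ∧ ∫ p, f p * g p = 0 := by
  induction hg using Submodule.span_induction with
  | mem x hx =>
    obtain ⟨m, n, rfl⟩ := hx
    exact ⟨phi_memLp m n, h m n⟩
  | zero => simp
  | add x y _ _ hx hy =>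
    refine ⟨hx.1.add hy.1, ?_⟩
    simp only [Pi.add_apply, mul_add]
    have i1 : Integrable (fun p => f p * x p) := hf.integrable_mul hx.1
    have i2 : Integrable (fun p => f p * y p) := hf.integrable_mul hy.1
    rw [integral_add i1 i2, hx.2, hy.2, add_zero]
  | smul a x _ hx =>
    refine ⟨hx.1.const_smul a, ?_⟩
    simp only [Pi.smul_apply, smul_eq_mul, mul_left_comm _ a]
    rw [integral_const_mul, hx.2, mul_zero]

lemma gauss_memLp (s t : ℝ) : MemLp (fun p : ℝ × ℝ => phi 0 0 p * Real.exp |s * p.1 + t * p.2|) 2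
    (volume : Measure (ℝ × ℝ)) := by
  have hb : MemLp (fun p : ℝ × ℝ => Real.exp (s^2+t^2) * Real.exp (-(p.1^2+p.2^2)/4)) 2 (volume : Measure (ℝ × ℝ)) := by
    refine MemLp.const_mul ?_ _
    rw [memLp_two_iff_integrable_sq (Continuous.aestronglyMeasurable (by fun_prop))]
    have i := integrable_exp_neg_mul_sq (b := 1/2) (by norm_num)
    refine (i.mul_prod i).congr (Eventually.of_forall fun p => ?_)
    simp only []
    rw [← Real.exp_add, ← Real.exp_nat_mul]; congr 1; push_cast; ring
  refine hb.mono (Continuous.aestronglyMeasurable ?_) (Eventually.of_forall fun p => ?_)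
  · have := phi_cont 0 0
    fun_prop
  · simp only [phi, H, Polynomial.eval_one, one_mul]
    rw [← Real.exp_add, ← Real.exp_add, Real.norm_eq_abs, Real.norm_eq_abs, Real.abs_exp, Real.abs_exp]
    apply Real.exp_le_exp.2
    have : |s * p.1 + t * p.2| ≤ s^2+t^2 + (p.1^2+p.2^2)/4 := by
      rw [abs_le]; constructor <;> nlinarith [sq_nonneg (s - p.1/2), sq_nonneg (t - p.2/2), sq_nonneg (s + p.1/2), sq_nonneg (t + p.2/2)]
    linarith

lemma char_zero (f : ℝ × ℝ → ℝ) (hf : MemLp f 2 (volume : Measure (ℝ × ℝ)))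
    (h : ∀ m n, ∫ p, f p * phi m n p = 0) (s t : ℝ) :
    ∫ p : ℝ × ℝ, ((f p * phi 0 0 p : ℝ) : ℂ) * Complex.exp ((s * p.1 + t * p.2 : ℝ) * Complex.I) = 0 := by
  set F : ℕ → ℝ × ℝ → ℂ := fun k p => ((f p * phi 0 0 p : ℝ) : ℂ) * ((((s * p.1 + t * p.2 : ℝ) : ℂ) * Complex.I)^k / (k.factorial : ℂ)) with hF
  have hF' : ∀ k p, F k p = (Complex.I^k / (k.factorial : ℂ)) * ((f p * ((s * p.1 + t * p.2)^k * phi 0 0 p) : ℝ) : ℂ) := by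
    intro k p; simp only [hF]; rw [mul_pow]; push_cast; ring
  have hFi : ∀ k, ∫ p, F k p = 0 := by
    intro k
    simp only [hF']
    rw [integral_const_mul, integral_complex_ofReal, (PhiS_orth f hf h _ (PhiS_pow s t k)).2]
    simp
  have key := hasSum_integral_of_dominated_convergence (μ := (volume : Measure (ℝ × ℝ))) (F := F)
    (f := fun p => ((f p * phi 0 0 p : ℝ) : ℂ) * Complex.exp ((s * p.1 + t * p.2 : ℝ) * Complex.I))
    (fun k p => |f p * phi 0 0 p| * (|s * p.1 + t * p.2|^k / k.factorial)) ?_ ?_ ?_ ?_ ?_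
  · simp only [hFi] at key
    exact (key.unique hasSum_zero)
  · intro k
    have hi : Integrable (fun p => f p * ((s * p.1 + t * p.2)^k * phi 0 0 p)) (volume : Measure (ℝ × ℝ)) :=
      hf.integrable_mul (PhiS_orth f hf h _ (PhiS_pow s t k)).1
    have := (hi.ofReal (𝕜 := ℂ)).const_mul (Complex.I^k / (k.factorial : ℂ))
    refine this.aestronglyMeasurable.congr (Eventually.of_forall fun p => ?_)
    rw [hF']; rfl
  · intro k
    refine Eventually.of_forall fun p => ?_
    simp only [hF, norm_mul, norm_div, norm_pow, Complex.norm_real, Complex.norm_I, mul_one, Real.norm_eq_abs, Complex.norm_natCast, abs_mul]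
    exact le_rfl
  · refine Eventually.of_forall fun p => ?_
    exact (Real.summable_pow_div_factorial _).mul_left _
  · have : Integrable (fun p => f p * (phi 0 0 p * Real.exp |s * p.1 + t * p.2|)) (volume : Measure (ℝ × ℝ)) :=
      hf.integrable_mul (gauss_memLp s t)
    refine this.norm.congr (Eventually.of_forall fun p => ?_)
    simp only []
    rw [tsum_mul_left, ← mul_assoc, norm_mul, Real.norm_eq_abs, Real.norm_eq_abs, Real.abs_exp]
    congr 1
    rw [Real.exp_eq_exp_ℝ, NormedSpace.exp_eq_tsum_div]
  · refine Eventually.of_forall fun p => ?_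
    simp only [hF]
    refine HasSum.mul_left _ ?_
    rw [Complex.exp_eq_exp_ℂ]
    exact NormedSpace.expSeries_div_hasSum_exp _

lemma ae_zero_of_char (g : ℝ × ℝ → ℝ) (hg : Integrable g)
    (h : ∀ s t : ℝ, ∫ p : ℝ × ℝ, ((g p : ℝ) : ℂ) * Complex.exp ((s * p.1 + t * p.2 : ℝ) * Complex.I) = 0) :
    g =ᵐ[volume] 0 := by
  have fin : ∀ k : ℝ × ℝ → ℝ, Integrable k → IsFiniteMeasure ((volume : Measure (ℝ × ℝ)).withDensity (fun p => ENNReal.ofReal (k p))) := by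
    intro k hk
    exact isFiniteMeasure_withDensity_ofReal hk.2
  have := fin g hg
  have := fin (fun p => -g p) hg.neg
  have m1 : AEMeasurable (fun p => ENNReal.ofReal (g p)) (volume : Measure (ℝ × ℝ)) := hg.aemeasurable.ennreal_ofReal
  have m2 : AEMeasurable (fun p => ENNReal.ofReal (-g p)) (volume : Measure (ℝ × ℝ)) := hg.aemeasurable.neg.ennreal_ofReal
  have cint : ∀ (k : ℝ × ℝ → ℝ), Integrable k → ∀ s t : ℝ, Integrable (fun p : ℝ × ℝ => ((k p : ℝ) : ℂ) * Complex.exp ((s * p.1 + t * p.2 : ℝ) * Complex.I)) := by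
    intro k hk s t
    refine Integrable.mul_bdd (c := 1) (hk.ofReal (𝕜 := ℂ)) ?_ ?_
    · exact Continuous.aestronglyMeasurable (by fun_prop)
    · exact Eventually.of_forall fun p => by rw [Complex.norm_exp_ofReal_mul_I]
  have heq : (volume : Measure (ℝ × ℝ)).withDensity (fun p => ENNReal.ofReal (g p))
      = (volume : Measure (ℝ × ℝ)).withDensity (fun p => ENNReal.ofReal (-g p)) := by
    apply Measure.ext_of_charFunDual
    ext L
    set s := L (1, 0)
    set t := L (0, 1)
    have hL : ∀ p : ℝ × ℝ, L p = s * p.1 + t * p.2 := by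
      intro p
      have : p = p.1 • ((1:ℝ), (0:ℝ)) + p.2 • ((0:ℝ), (1:ℝ)) := by ext <;> simp
      conv_lhs => rw [this]
      rw [map_add, map_smul, map_smul, smul_eq_mul, smul_eq_mul]; ring
    simp only [charFunDual_apply, hL]
    rw [integral_withDensity_eq_integral_toReal_smul₀ m1 (by simp), integral_withDensity_eq_integral_toReal_smul₀ m2 (by simp)]
    rw [← sub_eq_zero]
    simp only [ENNReal.toReal_ofReal', Complex.real_smul]
    rw [← integral_sub (cint _ hg.pos_part s t) (cint _ hg.neg_part s t)]
    rw [← h s t]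
    congr 1; ext p
    rw [← sub_mul, ← Complex.ofReal_sub]
    congr 2
    rcases le_total (g p) 0 with h | h
    · rw [max_eq_right h, max_eq_left (by linarith)]; ring
    · rw [max_eq_left h, max_eq_right (by linarith)]; ring
  have := (withDensity_eq_iff_of_sigmaFinite m1 m2).1 heq
  filter_upwards [this] with p hp
  have hp' : ENNReal.ofReal (g p) = ENNReal.ofReal (-g p) := hp
  by_contra h0
  rcases lt_or_gt_of_ne h0 with h | h
  · rw [ENNReal.ofReal_of_nonpos (le_of_lt h)] at hp'
    have := ENNReal.ofReal_eq_zero.1 hp'.symm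
    simp at h; linarith
  · rw [ENNReal.ofReal_of_nonpos (p := -g p) (by simp at h; linarith)] at hp'
    have := ENNReal.ofReal_eq_zero.1 hp'
    simp at h; linarith

lemma complete (f : ℝ × ℝ → ℝ) (hf : MemLp f 2 (volume : Measure (ℝ × ℝ)))
    (h : ∀ m n, ∫ p, f p * phi m n p = 0) : f =ᵐ[volume] 0 := by
  have := ae_zero_of_char (fun p => f p * phi 0 0 p) (hf.integrable_mul (phi_memLp 0 0)) (char_zero f hf h)
  filter_upwards [this] with p hp
  have h2 : phi 0 0 p ≠ 0 := by simp [phi, H]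
  exact (mul_eq_zero.1 hp).resolve_right h2

lemma inner_toLp {f g : ℝ × ℝ → ℝ} (hf : MemLp f 2 (volume : Measure (ℝ × ℝ))) (hg : MemLp g 2 (volume : Measure (ℝ × ℝ))) :
    inner ℝ (hf.toLp f) (hg.toLp g) = ∫ p, f p * g p := by
  rw [L2.inner_def]
  refine integral_congr_ae ?_
  filter_upwards [hf.coeFn_toLp, hg.coeFn_toLp] with p h1 h2
  rw [h1, h2]; simp [mul_comm]

noncomputable def nn (a : ℕ × ℕ) : ℝ := cc a.1 * cc a.2
lemma nn_pos (a) : 0 < nn a := mul_pos (cc_pos _) (cc_pos _)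

noncomputable def bb (a : ℕ × ℕ) : Lp ℝ 2 (volume : Measure (ℝ × ℝ)) :=
  (Real.sqrt (nn a))⁻¹ • (phi_memLp a.1 a.2).toLp _

lemma bb_orthonormal : Orthonormal ℝ bb := by
  rw [orthonormal_iff_ite]
  intro a b
  rw [bb, bb, inner_smul_left, inner_smul_right, inner_toLp, phi_inner]
  by_cases h : a = b
  · subst h
    have := Real.sqrt_pos.2 (nn_pos a)
    have h2 := Real.mul_self_sqrt (nn_pos a).le
    simp only [if_true, conj_trivial]
    change _ * (_ * nn a) = 1
    field_simp
    nlinarith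
  · have : ¬ ((a.1, a.2) = (b.1, b.2)) := h
    rw [if_neg this, if_neg h]; simp

lemma bb_span : (Submodule.span ℝ (Set.range bb))ᗮ = ⊥ := by
  rw [Submodule.eq_bot_iff]
  intro f hf
  have hm : MemLp f 2 (volume : Measure (ℝ × ℝ)) := Lp.memLp f
  have hh : ∀ m n, ∫ p, f p * phi m n p = 0 := by
    intro m n
    have h1 := (Submodule.mem_orthogonal' _ _).1 hf (bb (m,n)) (Submodule.subset_span ⟨_, rfl⟩)
    rw [bb, inner_smul_right] at h1
    have h2 := (mul_eq_zero.1 h1).resolve_left (inv_ne_zero (Real.sqrt_pos.2 (nn_pos _)).ne')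
    have h3 : f = hm.toLp f := (Lp.toLp_coeFn f hm).symm
    rw [h3, inner_toLp] at h2
    exact h2
  have := complete f hm hh
  exact Lp.eq_zero_iff_ae_eq_zero.2 this

noncomputable def HB : HilbertBasis (ℕ × ℕ) ℝ (Lp ℝ 2 (volume : Measure (ℝ × ℝ))) :=
  HilbertBasis.mkOfOrthogonalEqBot bb_orthonormal bb_span

lemma parseval (v : ℝ × ℝ → ℝ) (hv : MemLp v 2 (volume : Measure (ℝ × ℝ))) :
    HasSum (fun a : ℕ × ℕ => (∫ p, v p * phi a.1 a.2 p)^2 / nn a) (∫ p, v p * v p) := by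
  have := HB.hasSum_inner_mul_inner (hv.toLp v) (hv.toLp v)
  rw [inner_toLp] at this
  refine Eq.mp (congrArg (fun F => HasSum F _) (funext fun a => ?_)) this
  symm
  have hb : HB a = bb a := by simp [HB]
  rw [hb, bb, inner_smul_left, inner_smul_right, inner_toLp, inner_toLp]
  have h := Real.sqrt_pos.2 (nn_pos a)
  have h2 := Real.sq_sqrt (nn_pos a).le
  simp only [conj_trivial]
  simp only [mul_comm (phi a.1 a.2 _)]
  conv_lhs => rw [← h2]
  field_simp

lemma nn_succ1 (m n : ℕ) : nn (m+1, n) = 2 * (m+1) * nn (m, n) := by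
  simp only [nn, cc_succ]; ring
lemma nn_succ2 (m n : ℕ) : nn (m, n+1) = 2 * (n+1) * nn (m, n) := by
  simp only [nn, cc_succ]; ring

lemma spectral (ℓ : ℕ) (v gx gy : ℝ × ℝ → ℝ) (hv : MemLp v 2 (volume : Measure (ℝ × ℝ)))
    (hx : MemLp gx 2 (volume : Measure (ℝ × ℝ))) (hy : MemLp gy 2 (volume : Measure (ℝ × ℝ)))
    (ex : ∀ m n, ∫ p, gx p * phi m n p = ∫ p, v p * phi (m+1) n p)
    (ey : ∀ m n, ∫ p, gy p * phi m n p = ∫ p, v p * phi m (n+1) p)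
    (en : (∫ p, gx p * gx p) + (∫ p, gy p * gy p) = 2 * ℓ * ∫ p, v p * v p)
    (lo : ∀ m n, m + n < ℓ → ∫ p, v p * phi m n p = 0) :
    ∃ s c, v =ᵐ[volume] fu s c := by
  set A : ℕ × ℕ → ℝ := fun a => ∫ p, v p * phi a.1 a.2 p with hA
  have hv' : HasSum (fun a => A a ^ 2 / nn a) (∫ p, v p * v p) := parseval v hv
  have hx' : HasSum (fun a : ℕ × ℕ => 2 * a.1 * (A a ^ 2 / nn a)) (∫ p, gx p * gx p) := by
    have inj : Function.Injective (fun a : ℕ × ℕ => (a.1 + 1, a.2)) := by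
      rintro ⟨a, b⟩ ⟨c, d⟩ h; simp at h; simp [h]
    rw [← inj.hasSum_iff]
    · convert parseval gx hx using 1
      ext a
      simp only [Function.comp, ex]
      rw [nn_succ1]
      have := nn_pos a
      simp only [hA]
      have h2 : (0:ℝ) < a.1 + 1 := by positivity
      push_cast
      field_simp
    · rintro ⟨a, b⟩ h
      cases a with
      | zero => simp
      | succ a => exact absurd ⟨(a, b), rfl⟩ h
  have hy' : HasSum (fun a : ℕ × ℕ => 2 * a.2 * (A a ^ 2 / nn a)) (∫ p, gy p * gy p) := by
    have inj : Function.Injective (fun a : ℕ × ℕ => (a.1, a.2 + 1)) := by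
      rintro ⟨a, b⟩ ⟨c, d⟩ h; simp at h; simp [h]
    rw [← inj.hasSum_iff]
    · convert parseval gy hy using 1
      ext a
      simp only [Function.comp, ey]
      rw [nn_succ2]
      have := nn_pos a
      simp only [hA]
      have h2 : (0:ℝ) < a.2 + 1 := by positivity
      push_cast
      field_simp
    · rintro ⟨a, b⟩ h
      cases b with
      | zero => simp
      | succ b => exact absurd ⟨(a, b), rfl⟩ h
  have hz := (hx'.add hy').sub (hv'.mul_left (2 * (ℓ:ℝ)))
  rw [en, sub_self] at hz
  have hnn : ∀ a : ℕ × ℕ, 0 ≤ 2 * a.1 * (A a ^ 2 / nn a) + 2 * a.2 * (A a ^ 2 / nn a) - 2 * ℓ * (A a ^ 2 / nn a) := by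
    intro a
    by_cases h : a.1 + a.2 < ℓ
    · have : A a = 0 := lo _ _ h
      simp [this]
    · have h1 : (ℓ : ℝ) ≤ a.1 + a.2 := by exact_mod_cast not_lt.1 h
      have h2 : 0 ≤ A a ^ 2 / nn a := div_nonneg (sq_nonneg _) (nn_pos a).le
      nlinarith
  have hA0 : ∀ a : ℕ × ℕ, a.1 + a.2 ≠ ℓ → A a = 0 := by
    intro a ha
    have h1 := congrFun ((hasSum_zero_iff_of_nonneg hnn).1 hz) a
    have h2 : ((a.1:ℝ) + a.2 - ℓ) ≠ 0 := by
      rw [sub_ne_zero]; exact_mod_cast ha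
    have h3 : ((a.1:ℝ) + a.2 - ℓ) * (A a ^ 2 / nn a) = 0 := by
      simp only [Pi.zero_apply] at h1
      linear_combination h1 / 2
    have h4 := (mul_eq_zero.1 h3).resolve_left h2
    have h5 := (div_eq_zero_iff.1 h4).resolve_right (nn_pos a).ne'
    exact pow_eq_zero_iff (two_ne_zero) |>.1 h5
  refine ⟨Finset.HasAntidiagonal.antidiagonal ℓ, fun a => A a / nn a, ?_⟩
  set w := fu (Finset.HasAntidiagonal.antidiagonal ℓ) (fun a => A a / nn a) with hw
  have hwm : MemLp w 2 (volume : Measure (ℝ × ℝ)) := fu_memLp _ _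
  have := complete (fun p => v p - w p) (hv.sub hwm) ?_
  · filter_upwards [this] with p hp
    exact sub_eq_zero.1 hp
  · intro m n
    have i1 : Integrable (fun p => v p * phi m n p) (volume : Measure (ℝ × ℝ)) := hv.integrable_mul (phi_memLp m n)
    have i2 : Integrable (fun p => w p * phi m n p) (volume : Measure (ℝ × ℝ)) := hwm.integrable_mul (phi_memLp m n)
    simp only [sub_mul]
    rw [integral_sub i1 i2]
    have : ∫ p, w p * phi m n p = ∑ a ∈ Finset.HasAntidiagonal.antidiagonal ℓ, (A a / nn a) * (if (a.1, a.2) = (m, n) then cc a.1 * cc a.2 else 0) := by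
      simp only [hw, fu, Finset.sum_mul, mul_assoc]
      rw [integral_finsetSum]
      · refine Finset.sum_congr rfl fun a _ => ?_
        rw [integral_const_mul, phi_inner]
      · intro a _
        have : Integrable (fun p => phi a.1 a.2 p * phi m n p) (volume : Measure (ℝ × ℝ)) :=
          (phi_memLp a.1 a.2).integrable_mul (phi_memLp m n)
        exact this.const_mul _
    rw [this]
    change A (m, n) - _ = 0
    by_cases h : m + n = ℓ
    · rw [Finset.sum_eq_single (m, n)]
      · rw [if_pos rfl]
        change A (m,n) - A (m,n) / nn (m,n) * nn (m,n) = 0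
        rw [div_mul_cancel₀ _ (nn_pos _).ne', sub_self]
      · intro b _ hb
        rw [if_neg (by exact hb), mul_zero]
      · intro hh; exact absurd (Finset.HasAntidiagonal.mem_antidiagonal.2 h) hh
    · rw [hA0 _ h, Finset.sum_eq_zero]
      · simp
      · intro b hb
        rw [if_neg, mul_zero]
        rintro hh
        apply h
        rw [Finset.HasAntidiagonal.mem_antidiagonal] at hb
        rw [Prod.mk.injEq] at hh
        omega

lemma phi_analytic (m n : ℕ) : AnalyticOnNhd ℝ (phi m n) Set.univ := by
  intro p _
  have h1 : AnalyticAt ℝ (fun p : ℝ × ℝ => (H m).eval p.1) p := by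
    have := AnalyticAt.aeval_polynomial (𝕜 := ℝ) (A := ℝ) (analyticAt_fst (𝕜 := ℝ) (p := p)) (H m)
    simpa using this
  have h2 : AnalyticAt ℝ (fun p : ℝ × ℝ => (H n).eval p.2) p := by
    have := AnalyticAt.aeval_polynomial (𝕜 := ℝ) (A := ℝ) (analyticAt_snd (𝕜 := ℝ) (p := p)) (H n)
    simpa using this
  have h3 : AnalyticAt ℝ (fun p : ℝ × ℝ => -(p.1^2+p.2^2)/2) p := by
    have a1 := analyticAt_fst (𝕜 := ℝ) (p := p)
    have a2 := analyticAt_snd (𝕜 := ℝ) (p := p)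
    exact ((a1.pow 2).add (a2.pow 2)).neg.div_const
  exact (h1.mul h2).mul h3.rexp

lemma fu_zero_of_open (s c) (U : Set (ℝ × ℝ)) (hU : IsOpen U) (hne : U.Nonempty)
    (h : ∀ p ∈ U, fu s c p = 0) : ∀ p, fu s c p = 0 := by
  have han : AnalyticOnNhd ℝ (fu s c) Set.univ := by
    unfold fu
    exact Finset.analyticOnNhd_fun_sum _ fun a _ => analyticOnNhd_const.mul (phi_analytic _ _)
  obtain ⟨q, hq⟩ := hne
  have := han.eqOn_zero_of_preconnected_of_eventuallyEq_zero isPreconnected_univ (Set.mem_univ q)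
    (by filter_upwards [hU.mem_nhds hq] with z hz using h z hz)
  exact fun p => this (Set.mem_univ p)

lemma H_neg (n : ℕ) (x : ℝ) : (H n).eval (-x) = (-1)^n * (H n).eval x := by
  induction n using Nat.strong_induction_on with
  | _ n ih =>
    match n with
    | 0 => simp [H]
    | 1 => simp [H]
    | n + 2 =>
      simp only [H, Polynomial.eval_sub, Polynomial.eval_mul, Polynomial.eval_C, Polynomial.eval_X,
        ih n (by omega), ih (n+1) (by omega)]
      ring

lemma phi_neg (m n : ℕ) (p : ℝ × ℝ) : phi m n (-p) = (-1)^(m+n) * phi m n p := by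
  simp only [phi, Prod.fst_neg, Prod.snd_neg, H_neg, neg_sq]
  ring

lemma fu_neg (ℓ : ℕ) (s : Finset (ℕ × ℕ)) (hs : ∀ a ∈ s, a.1 + a.2 = ℓ) (c) (p) : fu s c (-p) = (-1)^ℓ * fu s c p := by
  simp only [fu, Finset.mul_sum]
  refine Finset.sum_congr rfl fun a ha => ?_
  rw [phi_neg, hs a ha]; ring

lemma int_odd (ℓ : ℕ) (s : Finset (ℕ × ℕ)) (hs : ∀ a ∈ s, a.1 + a.2 = ℓ) (c) (D : Set (ℝ × ℝ)) (hD : IsOpen D)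
    (hsym : ∀ p, -p ∈ D ↔ p ∈ D) (m n : ℕ) (hmn : (m + n) % 2 ≠ ℓ % 2) :
    ∫ p in D, fu s c p * phi m n p = 0 := by
  rw [← integral_indicator hD.measurableSet]
  set F := D.indicator fun p => fu s c p * phi m n p
  have h1 : ∀ p, F (-p) = - F p := by
    intro p
    by_cases hp : p ∈ D
    · have hp' := (hsym p).2 hp
      simp only [F, Set.indicator_of_mem hp, Set.indicator_of_mem hp', fu_neg ℓ s hs, phi_neg]
      have : ((-1:ℝ))^ℓ * (-1)^(m+n) = -1 := by
        rw [← pow_add]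
        apply Odd.neg_one_pow
        rw [Nat.odd_iff]; omega
      linear_combination (fu s c p * phi m n p) * this
    · have hp' := fun h => hp ((hsym p).1 h)
      simp only [F, Set.indicator_of_notMem hp, Set.indicator_of_notMem hp', neg_zero]
  have h2 := integral_neg_eq_self F (volume : Measure (ℝ × ℝ))
  simp only [h1, integral_neg] at h2
  linarith

section
variable {ι : Type*} [Fintype ι] (D : ι → Set (ℝ × ℝ)) (k : ι → ℝ)

noncomputable def VV (F : ℝ × ℝ → ℝ) : ℝ × ℝ → ℝ := fun p => ∑ i, k i * (D i).indicator F p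

lemma VV_memLp (hD : ∀ i, IsOpen (D i)) (F) (hF : MemLp F 2 (volume : Measure (ℝ × ℝ))) :
    MemLp (VV D k F) 2 (volume : Measure (ℝ × ℝ)) := by
  unfold VV
  exact memLp_finsetSum _ fun a _ => (hF.indicator (hD a).measurableSet).const_mul _

lemma VV_int (hD : ∀ i, IsOpen (D i)) (F G) (hF : MemLp F 2 (volume : Measure (ℝ × ℝ)))
    (hG : MemLp G 2 (volume : Measure (ℝ × ℝ))) :
    ∫ p, VV D k F p * G p = ∑ i, k i * ∫ p in D i, F p * G p := by
  have : ∀ p, VV D k F p * G p = ∑ i, k i * (D i).indicator (fun p => F p * G p) p := by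
    intro p
    simp only [VV, Finset.sum_mul]
    refine Finset.sum_congr rfl fun i _ => ?_
    by_cases h : p ∈ D i <;> simp [h, mul_assoc]
  simp only [this]
  have hi : Integrable (fun p => F p * G p) (volume : Measure (ℝ × ℝ)) := hF.integrable_mul hG
  rw [integral_finsetSum]
  · refine Finset.sum_congr rfl fun i _ => ?_
    rw [integral_const_mul, integral_indicator (hD i).measurableSet]
  · intro i _
    exact (hi.indicator (hD i).measurableSet).const_mul _

lemma VV_on (hdis : ∀ i j, i ≠ j → Disjoint (D i) (D j)) (F) (i : ι) (p) (hp : p ∈ D i) :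
    VV D k F p = k i * F p := by
  unfold VV
  rw [Finset.sum_eq_single i]
  · rw [Set.indicator_of_mem hp]
  · intro j _ hj
    rw [Set.indicator_of_notMem, mul_zero]
    exact fun h => Set.disjoint_left.1 (hdis j i hj) h hp
  · intro h; exact absurd (Finset.mem_univ _) h

lemma VV_sq (hdis : ∀ i j, i ≠ j → Disjoint (D i) (D j)) (hD : ∀ i, IsOpen (D i)) (F) (hF : MemLp F 2 (volume : Measure (ℝ × ℝ))) :
    ∫ p, VV D k F p * VV D k F p = ∑ i, k i ^ 2 * ∫ p in D i, F p * F p := by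
  rw [VV_int D k hD F _ hF (VV_memLp D k hD F hF)]
  refine Finset.sum_congr rfl fun i _ => ?_
  have : ∫ p in D i, F p * VV D k F p = ∫ p in D i, k i * (F p * F p) := by
    refine setIntegral_congr_fun (hD i).measurableSet fun p hp => ?_
    simp only [VV_on D k hdis F i p hp]; ring
  rw [this, integral_const_mul]; ring
end

lemma courant {ι : Type*} [Fintype ι] (ℓ : ℕ) (s : Finset (ℕ × ℕ)) (hs : ∀ a ∈ s, a.1 + a.2 = ℓ) (c)
    (D : ι → Set (ℝ × ℝ)) (hD : ∀ i, IsOpen (D i)) (hne : ∀ i, ∃ p ∈ D i, fu s c p ≠ 0)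
    (hdis : ∀ i j, i ≠ j → Disjoint (D i) (D j)) (hf : ∀ i, ∀ p ∈ frontier (D i), fu s c p = 0)
    (hsym : ∀ i p, -p ∈ D i ↔ p ∈ D i)
    (T : Finset (ℕ × ℕ)) (hT : ∀ m n, m + n < ℓ → (m + n) % 2 = ℓ % 2 → (m, n) ∈ T) :
    Fintype.card ι ≤ T.card + 1 := by
  by_contra hcard
  push Not at hcard
  have : 0 < Fintype.card ι := by omega
  obtain ⟨i0⟩ := Fintype.card_pos_iff.1 this
  let Lm : (ι → ℝ) →ₗ[ℝ] ((T → ℝ) × ℝ) :=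
    { toFun := fun k => (fun a => ∑ i, k i * ∫ p in D i, fu s c p * phi a.1.1 a.1.2 p, k i0)
      map_add' := by
        intro x y; ext <;> simp [add_mul, Finset.sum_add_distrib]
      map_smul' := by
        intro r x; ext <;> simp [Finset.mul_sum, mul_assoc] }
  have hk : LinearMap.ker Lm ≠ ⊥ := Lm.ker_ne_bot_of_finrank_lt (by simpa using hcard)
  obtain ⟨k, hkm, hk0⟩ := (Submodule.ne_bot_iff _).1 hk
  rw [LinearMap.mem_ker] at hkm
  have hk1 : ∀ a ∈ T, ∑ i, k i * ∫ p in D i, fu s c p * phi a.1 a.2 p = 0 := by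
    intro a ha
    exact congrFun (congrArg Prod.fst hkm) ⟨a, ha⟩
  have hk2 : k i0 = 0 := congrArg Prod.snd hkm
  obtain ⟨s', c', hw⟩ := spectral ℓ (VV D k (fu s c)) (VV D k (fux s c)) (VV D k (fuy s c))
    (VV_memLp D k hD _ (fu_memLp s c)) (VV_memLp D k hD _ (fux_memLp s c)) (VV_memLp D k hD _ (fuy_memLp s c))
    (by
      intro m n
      rw [VV_int D k hD _ _ (fux_memLp s c) (phi_memLp m n), VV_int D k hD _ _ (fu_memLp s c) (phi_memLp _ n)]
      exact Finset.sum_congr rfl fun i _ => by rw [ibp_x s c (D i) (hD i) (hf i)])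
    (by
      intro m n
      rw [VV_int D k hD _ _ (fuy_memLp s c) (phi_memLp m n), VV_int D k hD _ _ (fu_memLp s c) (phi_memLp m _)]
      exact Finset.sum_congr rfl fun i _ => by rw [ibp_y s c (D i) (hD i) (hf i)])
    (by
      rw [VV_sq D k hdis hD _ (fux_memLp s c), VV_sq D k hdis hD _ (fuy_memLp s c), VV_sq D k hdis hD _ (fu_memLp s c),
        Finset.mul_sum, ← Finset.sum_add_distrib]
      refine Finset.sum_congr rfl fun i _ => ?_
      have := energy ℓ s hs c (D i) (hD i) (hf i)
      linear_combination (k i ^ 2) * this)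
    (by
      intro m n hmn
      rw [VV_int D k hD _ _ (fu_memLp s c) (phi_memLp m n)]
      by_cases hp : (m + n) % 2 = ℓ % 2
      · exact hk1 (m, n) (hT m n hmn hp)
      · refine Finset.sum_eq_zero fun i _ => ?_
        rw [int_odd ℓ s hs c (D i) (hD i) (hsym i) m n hp, mul_zero])
  have w0 : ∀ p ∈ D i0, fu s' c' p = 0 := by
    have : fu s' c' =ᵐ[(volume : Measure (ℝ × ℝ)).restrict (D i0)] fun _ => 0 := by
      filter_upwards [ae_restrict_of_ae hw, ae_restrict_mem (hD i0).measurableSet] with p hp hpD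
      rw [← hp, VV_on D k hdis _ i0 p hpD, hk2, zero_mul]
    exact Measure.eqOn_open_of_ae_eq this (hD i0) (fu_cont s' c').continuousOn continuousOn_const
  have w1 := fu_zero_of_open s' c' (D i0) (hD i0) (let ⟨p, hp, _⟩ := hne i0; ⟨p, hp⟩) w0
  obtain ⟨i, hi⟩ := Function.ne_iff.1 hk0
  obtain ⟨p, hp, hup⟩ := hne i
  have : (fun p => k i * fu s c p) =ᵐ[(volume : Measure (ℝ × ℝ)).restrict (D i)] fun _ => 0 := by
    filter_upwards [ae_restrict_of_ae hw, ae_restrict_mem (hD i).measurableSet] with p hp hpD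
    rw [VV_on D k hdis _ i p hpD, w1] at hp
    exact hp
  have h := Measure.eqOn_open_of_ae_eq this (hD i) (continuous_const.mul (fu_cont s c)).continuousOn continuousOn_const hp
  exact (mul_ne_zero hi hup) h

lemma eig_fu (ℓ : ℕ) (u : ℝ × ℝ → ℝ) (hu : u ∈ eigenspace ℓ) :
    ∃ c, u = fu (Finset.HasAntidiagonal.antidiagonal ℓ) c := by
  induction hu using Submodule.span_induction with
  | mem x h =>
    obtain ⟨j, hj, rfl⟩ := h
    refine ⟨fun a => if a = (ℓ - j, j) then 1 else 0, ?_⟩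
    ext p
    rw [fu, Finset.sum_eq_single (ℓ - j, j)]
    · simp
    · intro b _ hb; simp [hb]
    · intro h; exact absurd (Finset.HasAntidiagonal.mem_antidiagonal.2 (by simp; omega)) h
  | zero => exact ⟨0, by ext p; simp [fu]⟩
  | add x y _ _ hx hy =>
    obtain ⟨c, rfl⟩ := hx
    obtain ⟨d, rfl⟩ := hy
    exact ⟨c + d, by ext p; simp [fu, add_mul, Finset.sum_add_distrib]⟩
  | smul a x _ hx =>
    obtain ⟨c, rfl⟩ := hx
    exact ⟨a • c, by ext p; simp [fu, Finset.mul_sum, mul_assoc]⟩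

/-- degrees below `ℓ` of same parity -/
def TT (ℓ : ℕ) : Finset (ℕ × ℕ) :=
  (Finset.range (ℓ/2)).biUnion fun k => Finset.HasAntidiagonal.antidiagonal (ℓ - 2 * (k+1))

lemma TT_mem (ℓ m n : ℕ) (h : m + n < ℓ) (hp : (m + n) % 2 = ℓ % 2) : (m, n) ∈ TT ℓ := by
  simp only [TT, Finset.mem_biUnion, Finset.mem_range, Finset.HasAntidiagonal.mem_antidiagonal]
  exact ⟨(ℓ - (m+n))/2 - 1, by omega, by omega⟩

lemma sum_aux (e r : ℕ) : ∑ k ∈ Finset.range r, ((2 * r + e) - 2 * (k+1) + 1) = r^2 + e * r := by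
  rw [← Finset.sum_range_reflect]
  have : ∀ k ∈ Finset.range r, ((2 * r + e) - 2 * ((r - 1 - k)+1) + 1) = 2 * k + e + 1 := by
    intro k hk
    rw [Finset.mem_range] at hk
    omega
  rw [Finset.sum_congr rfl this]
  clear this
  induction r with
  | zero => simp
  | succ r ih => rw [Finset.sum_range_succ, ih]; ring

lemma TT_card (ℓ : ℕ) : 2 * ((TT ℓ).card + 1) ≤ muL ℓ := by
  have h : (TT ℓ).card ≤ ∑ k ∈ Finset.range (ℓ/2), (ℓ - 2 * (k+1) + 1) := by
    refine Finset.card_biUnion_le.trans ?_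
    simp
  have h2 := sum_aux (ℓ % 2) (ℓ / 2)
  rw [Nat.div_add_mod] at h2
  rw [h2] at h
  unfold muL
  split_ifs with h0
  · rw [h0] at h; nlinarith
  · have : ℓ % 2 = 1 := by omega
    rw [this] at h; nlinarith

lemma nodal {u : ℝ × ℝ → ℝ} (hc : Continuous u) (hs : ∀ p, u (-p) ≠ 0 ↔ u p ≠ 0) (N : ℕ)
    (key : ∀ S : Finset (Set (ℝ × ℝ)), (∀ D ∈ S, IsOpen D) → (∀ D ∈ S, ∃ p ∈ D, u p ≠ 0) →
      (∀ D ∈ S, ∀ D' ∈ S, D ≠ D' → Disjoint D D') → (∀ D ∈ S, ∀ p ∈ frontier D, u p = 0) →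
      (∀ D ∈ S, ∀ p, -p ∈ D ↔ p ∈ D) → S.card ≤ N) : mu u ≤ 2 * N := by
  classical
  unfold mu
  set W := {q : ℝ × ℝ | u q ≠ 0} with hW
  set CC := {C : Set (ℝ × ℝ) | ∃ p : ℝ × ℝ, u p ≠ 0 ∧ C = connectedComponentIn W p} with hCC
  have hWo : IsOpen W := hc.isOpen_preimage _ isOpen_compl_singleton
  by_cases hfin : CC.Finite
  swap
  · rw [Set.Infinite.ncard hfin]; exact Nat.zero_le _
  have cop : ∀ C ∈ CC, IsOpen C := by
    rintro C ⟨p, hp, rfl⟩; exact hWo.connectedComponentIn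
  have csub : ∀ C ∈ CC, C ⊆ W := by
    rintro C ⟨p, hp, rfl⟩; exact connectedComponentIn_subset _ _
  have cne : ∀ C ∈ CC, C.Nonempty := by
    rintro C ⟨p, hp, rfl⟩; exact ⟨p, mem_connectedComponentIn hp⟩
  have ceq : ∀ C ∈ CC, ∀ C' ∈ CC, ∀ p, p ∈ C → p ∈ C' → C = C' := by
    rintro C ⟨p, hp, rfl⟩ C' ⟨q, hq, rfl⟩ x h1 h2
    rw [connectedComponentIn_eq h1, connectedComponentIn_eq h2]
  have cfr : ∀ C ∈ CC, ∀ p ∈ frontier C, u p = 0 := by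
    intro C hC p hp
    by_contra h
    have hC' : connectedComponentIn W p ∈ CC := ⟨p, h, rfl⟩
    have hpm : p ∈ connectedComponentIn W p := mem_connectedComponentIn h
    obtain ⟨z, hz1, hz2⟩ := mem_closure_iff.1 hp.1 _ (cop _ hC') hpm
    have := ceq _ hC' _ hC z hz1 hz2
    rw [this] at hpm
    have h2 := hp.2
    rw [(cop _ hC).interior_eq] at h2
    exact h2 hpm
  let ng : Set (ℝ × ℝ) → Set (ℝ × ℝ) := fun C => (fun p => -p) ⁻¹' C
  have ngng : ∀ C, ng (ng C) = C := by intro C; ext p; simp [ng]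
  have cneg : ∀ C ∈ CC, ng C ∈ CC := by
    rintro C ⟨p, hp, rfl⟩
    refine ⟨-p, (hs p).2 hp, ?_⟩
    have h1 := (Homeomorph.neg (ℝ × ℝ)).image_connectedComponentIn (s := W) (x := p) hp
    have hWW : (Homeomorph.neg (ℝ × ℝ)) '' W = W := by
      ext q
      constructor
      · rintro ⟨z, hz, rfl⟩; exact (hs z).2 hz
      · intro hq; exact ⟨-q, (hs q).2 hq, by simp⟩
    rw [hWW] at h1
    have h2 : (Homeomorph.neg (ℝ × ℝ)) p = -p := rfl
    rw [h2] at h1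
    rw [← h1]
    ext q
    constructor
    · intro hq; exact ⟨-q, hq, by simp⟩
    · rintro ⟨z, hz, rfl⟩; simpa [ng] using hz
  let f : Set (ℝ × ℝ) → Set (ℝ × ℝ) := fun C => C ∪ ng C
  have fint : ∀ C ∈ CC, ∀ C' ∈ CC, ∀ p, p ∈ f C → p ∈ f C' → C = C' ∨ C = ng C' := by
    intro C hC C' hC' p h1 h2
    rcases h1 with h1 | h1 <;> rcases h2 with h2 | h2
    · left; exact ceq _ hC _ hC' p h1 h2
    · right; exact ceq _ hC _ (cneg _ hC') p h1 h2
    · right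
      have := ceq _ (cneg _ hC) _ hC' p h1 h2
      rw [← this, ngng]
    · left
      have := ceq _ (cneg _ hC) _ (cneg _ hC') p h1 h2
      rw [← ngng C, this, ngng]
  have fng : ∀ C, f (ng C) = f C := by
    intro C; simp only [f, ngng]; exact Set.union_comm _ _
  set FS := hfin.toFinset with hFS
  have hmem : ∀ C, C ∈ FS ↔ C ∈ CC := fun C => hfin.mem_toFinset
  rw [Set.ncard_eq_toFinset_card CC hfin]
  have hcard := Finset.card_le_mul_card_image (f := f) FS 2 (by
    intro a ha
    obtain ⟨C0, hC0, rfl⟩ := Finset.mem_image.1 ha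
    refine (Finset.card_le_card (t := {C0, ng C0}) ?_).trans Finset.card_le_two
    intro C hC
    rw [Finset.mem_filter] at hC
    obtain ⟨q, hq⟩ := cne C ((hmem C).1 hC.1)
    have hq1 : q ∈ f C := Or.inl hq
    have hq2 : q ∈ f C0 := hC.2 ▸ hq1
    rcases fint C ((hmem C).1 hC.1) C0 ((hmem C0).1 hC0) q hq1 hq2 with h | h <;> simp [h])
  refine hcard.trans (Nat.mul_le_mul_left 2 ?_)
  apply key
  · intro D hD
    obtain ⟨C, hC, rfl⟩ := Finset.mem_image.1 hD
    rw [hmem] at hC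
    exact (cop _ hC).union (cop _ (cneg _ hC))
  · intro D hD
    obtain ⟨C, hC, rfl⟩ := Finset.mem_image.1 hD
    rw [hmem] at hC
    obtain ⟨q, hq⟩ := cne C hC
    exact ⟨q, Or.inl hq, csub _ hC hq⟩
  · intro D hD D' hD' hne
    obtain ⟨C, hC, rfl⟩ := Finset.mem_image.1 hD
    obtain ⟨C', hC', rfl⟩ := Finset.mem_image.1 hD'
    rw [hmem] at hC hC'
    rw [Set.disjoint_left]
    intro p h1 h2
    apply hne
    rcases fint C hC C' hC' p h1 h2 with h | h
    · rw [h]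
    · rw [h, fng]
  · intro D hD p hp
    obtain ⟨C, hC, rfl⟩ := Finset.mem_image.1 hD
    rw [hmem] at hC
    rcases frontier_union_subset _ _ hp with h | h
    · exact cfr _ hC p h.1
    · exact cfr _ (cneg _ hC) p h.2
  · intro D hD p
    obtain ⟨C, hC, rfl⟩ := Finset.mem_image.1 hD
    simp only [f, ng, Set.mem_union, Set.mem_preimage, neg_neg]
    exact or_comm

theorem improved_courant_bound (ℓ : ℕ) (u : ℝ × ℝ → ℝ)
    (hu : u ∈ eigenspace ℓ) (hu0 : u ≠ 0) :
    mu u ≤ muL ℓ ∧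
    (∀ m : ℕ, 3 ≤ m → muL m < m * (m + 1) / 2 + 1) ∧
    muL 2 = 2 * (2 + 1) / 2 + 1 := by
  refine ⟨?_, ?_, by decide⟩
  · refine le_trans ?_ (TT_card ℓ)
    obtain ⟨c, rfl⟩ := eig_fu ℓ u hu
    have hs : ∀ a ∈ Finset.HasAntidiagonal.antidiagonal ℓ, a.1 + a.2 = ℓ := fun a ha =>
      Finset.HasAntidiagonal.mem_antidiagonal.1 ha
    refine nodal (fu_cont _ c) ?_ _ ?_
    · intro p
      rw [fu_neg ℓ _ hs]
      simp
    · intro S h1 h2 h3 h4 h5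
      have := courant (ι := S) ℓ _ hs c (fun D => D.1) (fun D => h1 _ D.2) (fun D => h2 _ D.2)
        (fun D D' hne => h3 _ D.2 _ D'.2 (fun h => hne (Subtype.ext h))) (fun D => h4 _ D.2)
        (fun D => h5 _ D.2) (TT ℓ) (TT_mem ℓ)
      simpa using this
  · intro m hm
    unfold muL
    rcases Nat.even_or_odd' m with ⟨r, rfl | rfl⟩
    · rw [if_pos (by omega)]
      have e1 : 2 * r / 2 = r := by omega
      have e2 : 2 * r * (2 * r + 1) / 2 = r * (2 * r + 1) := by
        rw [mul_assoc]; simp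
      rw [e1, e2]
      have : 2 ≤ r := by omega
      nlinarith
    · rw [if_neg (by omega)]
      have e1 : (2 * r + 1) / 2 = r := by omega
      have e2 : (2 * r + 1) * (2 * r + 1 + 1) / 2 = (2 * r + 1) * (r + 1) := by
        rw [show (2 * r + 1) * (2 * r + 1 + 1) = 2 * ((2 * r + 1) * (r + 1)) by ring]; simp
      rw [e1, e2]
      have : 1 ≤ r := by omega
      nlinarith
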